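/- arXiv:2209.01366 — 2 statements merged into one kernel-verified Lean document; each statement's English description precedes it below -/
import Mathlib

section
/- For all n ≥ 2, opt_weak,<,2(S_n) ≥ p(n), where p(n) = Σ_{m=1}^{n} ⌊log₂ m⌋. -/
/-- `GuessForce ok V m` means: in the mistake-bound game with weak (yes/no) reinforcement
where queries have type `Q`, guesses have type `A`, and `ok q g f` says that guess `g` is a
correct answer to query `q` when the hidden target is `f`, an (adaptive) adversary whose
answers must stay consistent with some member of the current version space `V` can force
every deterministic learner to be answered "no" at least `m` times.
At each step the adversary chooses a query `q` and, depending on the learner's guess `g`,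
either answers "no" (`c g = true`, one more mistake, continuing from the consistent
functions for which the guess is wrong) or answers "yes" (`c g = false`, continuing from the
consistent functions for which the guess is correct). -/
inductive GuessForce {α Q A : Type*} (ok : Q → A → α → Prop) : Set α → ℕ → Prop where
  | zero (V : Set α) : V.Nonempty → GuessForce ok V 0
  | step (V : Set α) (m : ℕ) (q : Q) (c : A → Bool)
      (hne : ∀ g : A, (if c g then {f ∈ V | ¬ ok q g f} else {f ∈ V | ok q g f}).Nonempty)
      (h : ∀ g : A, GuessForce ok (if c g then {f ∈ V | ¬ ok q g f} else {f ∈ V | ok q g f})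
        (if c g then m else m + 1)) :
      GuessForce ok V (m + 1)

/-- `opt_weak,<,r(F)`: the order model. In each round the adversary chooses `r` distinct
inputs, and the learner guesses the permutation of `{1,…,r}` order-isomorphic to the values
of the target permutation at these inputs; weak reinforcement. -/
noncomputable def optOrder (n r : ℕ) (F : Set (Equiv.Perm (Fin n))) : ℕ :=
  sSup {m | GuessForce
    (fun (x : {x : Fin r → Fin n // Function.Injective x}) (σ : Equiv.Perm (Fin r)) f =>
      ∀ i j, σ i < σ j ↔ f (x.1 i) < f (x.1 j)) F m}

/-!
The adversary rejects every guess, so each comparison costs the learner one mistake and reveals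
only its outcome. Choosing the comparisons of binary insertion sort, the adversary keeps a set of
targets that increase along a sorted list and are otherwise unrestricted. Locating a new element
among the `k` possible positions in a list of length `k - 1` takes at least `⌊log₂ k⌋` halvings,
whatever the outcomes, which gives the sum of these numbers.
-/

section Lists

variable {α : Type*} {l : List α}

theorem length_eq_card_of_nodup_of_forall_mem [Fintype α] (hl : l.Nodup) (hmem : ∀ a, a ∈ l) :
    l.length = Fintype.card α := by
  classical simpa using Fintype.card_congr (hl.getEquivOfForallMemList l hmem)

theorem exists_eq_append_cons_of_add_lt_length {a b : ℕ} (h : a + b < l.length) :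
    ∃ l₁ y l₂, l = l₁ ++ y :: l₂ ∧ a ≤ l₁.length ∧ b ≤ l₂.length := by
  have ha : a < l.length := by omega
  refine ⟨l.take a, l[a], l.drop (a + 1), ?_, ?_, ?_⟩
  · rw [← List.drop_eq_getElem_cons ha, List.take_append_drop]
  · simp only [List.length_take]; omega
  · simp only [List.length_drop]; omega

end Lists

namespace GuessForce

variable {α Q A : Type*} {ok : Q → A → α → Prop} {V W : Set α} {m : ℕ}

theorem nonempty [Nonempty A] (h : GuessForce ok V m) : V.Nonempty := by
  cases h with
  | zero _ hV => exact hV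
  | step _ _ _ c hne _ =>
    refine (hne (Classical.arbitrary A)).mono ?_
    split_ifs <;> exact Set.sep_subset V _

theorem mono (h : GuessForce ok V m) (hVW : V ⊆ W) : GuessForce ok W m := by
  induction h generalizing W with
  | zero V hV => exact .zero W (hV.mono hVW)
  | step V m q c hne _ ih =>
    have answer_subset (g : A) : (if c g then {f ∈ V | ¬ ok q g f} else {f ∈ V | ok q g f}) ⊆
        if c g then {f ∈ W | ¬ ok q g f} else {f ∈ W | ok q g f} := by
      split_ifs <;> exact fun f hf => ⟨hVW hf.1, hf.2⟩
    exact .step W m q c (fun g => (hne g).mono (answer_subset g)) fun g => ih g (answer_subset g)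

theorem succ_of_forall_not (q : Q) (h : ∀ g, GuessForce ok {f ∈ V | ¬ ok q g f} m) :
    GuessForce ok V (m + 1) :=
  .step V m q (fun _ => true) (fun g => have : Nonempty A := ⟨g⟩; (h g).nonempty) h

-- A learner whose guess is correct for some remaining target eliminates a target with every
-- mistake.
theorem lt_ncard [Nonempty A] (hok : ∀ q f, ∃ g, ok q g f) (h : GuessForce ok V m)
    (hV : V.Finite) : m < V.ncard := by
  induction h with
  | zero V hne => exact (Set.ncard_pos hV).2 hne
  | step V m q c hne h ih =>
    obtain ⟨f, hf⟩ := (GuessForce.step V m q c hne h).nonempty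
    obtain ⟨g, hg⟩ := hok q f
    specialize ih g
    split_ifs at ih
    · have hlt : {f ∈ V | ¬ ok q g f}.ncard < V.ncard :=
        Set.ncard_lt_ncard ⟨Set.sep_subset _ _, fun hsub => (hsub hf).2 hg⟩ hV
      have := ih (hV.sep _)
      omega
    · exact (ih (hV.sep _)).trans_le (Set.ncard_le_ncard (Set.sep_subset _ _) hV)

end GuessForce

section OrderModel

variable {n r m : ℕ}

/-- The correctness relation of the order model: the guess `σ` is order-isomorphic to the values of
the target `f` at the inputs `x`. It is the relation inlined in `optOrder`. -/
abbrev IsOrderIsoAt (n r : ℕ) (x : {x : Fin r → Fin n // Function.Injective x})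
    (σ : Equiv.Perm (Fin r)) (f : Equiv.Perm (Fin n)) : Prop :=
  ∀ i j, σ i < σ j ↔ f (x.1 i) < f (x.1 j)

theorem exists_isOrderIsoAt (x : {x : Fin r → Fin n // Function.Injective x})
    (f : Equiv.Perm (Fin n)) : ∃ σ, IsOrderIsoAt n r x σ f := by
  let τ := Tuple.sort (f ∘ x.1)
  have hτ : StrictMono (f ∘ x.1 ∘ τ) := (Tuple.monotone_sort (f ∘ x.1)).strictMono_of_injective
    (f.injective.comp (x.2.comp τ.injective))
  exact ⟨τ.symm, fun i j => by simpa using (hτ.lt_iff_lt (a := τ.symm i) (b := τ.symm j)).symm⟩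

theorem GuessForce.le_optOrder {F : Set (Equiv.Perm (Fin n))}
    (h : GuessForce (IsOrderIsoAt n r) F m) : m ≤ optOrder n r F :=
  le_csSup ⟨F.ncard, fun _ hk => (GuessForce.lt_ncard exists_isOrderIsoAt hk F.toFinite).le⟩ h

theorem guessForce_succ_of_compare {V : Set (Equiv.Perm (Fin n))} {i j : Fin n} (hij : i ≠ j)
    (hlt : GuessForce (IsOrderIsoAt n 2) {f ∈ V | f i < f j} m)
    (hgt : GuessForce (IsOrderIsoAt n 2) {f ∈ V | f j < f i} m) :
    GuessForce (IsOrderIsoAt n 2) V (m + 1) := by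
  have hinj : Function.Injective ![i, j] := by simpa [Function.Injective, eq_comm] using hij
  refine .succ_of_forall_not ⟨![i, j], hinj⟩ fun σ => ?_
  by_cases hσ : σ 0 < σ 1
  · exact hgt.mono fun f hf => ⟨hf.1, fun hok => lt_asymm hf.2 ((hok 0 1).1 hσ)⟩
  · exact hlt.mono fun f hf => ⟨hf.1, fun hok => hσ ((hok 0 1).2 hf.2)⟩

end OrderModel

section BinaryInsertion

variable {n m v : ℕ} {l l₁ l₂ : List (Fin n)} {x : Fin n}

/-- The permutations whose values increase along the list `l`: the targets that remain possible
once the elements of `l` are known to be sorted in this order. -/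
def increasingAlong (l : List (Fin n)) : Set (Equiv.Perm (Fin n)) :=
  {f | l.Pairwise fun a b => f a < f b}

theorem increasingAlong_subset_of_sublist (h : l₁.Sublist l₂) :
    increasingAlong l₂ ⊆ increasingAlong l₁ :=
  fun _ hf => List.Pairwise.sublist h hf

theorem lt_of_mem_increasingAlong {f : Equiv.Perm (Fin n)} {a b : Fin n}
    (hf : f ∈ increasingAlong l) (hab : [a, b].Sublist l) : f a < f b := by
  simpa [increasingAlong] using increasingAlong_subset_of_sublist hab hf

theorem increasingAlong_nonempty (hl : l.Nodup) (hmem : ∀ a, a ∈ l) :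
    (increasingAlong l).Nonempty := by
  let position := (hl.getEquivOfForallMemList l hmem).symm
  have hpos (k : Fin l.length) : position (l.get k) = k := position.apply_symm_apply k
  have hlen : l.length = n := by simpa using length_eq_card_of_nodup_of_forall_mem hl hmem
  refine ⟨position.trans (finCongr hlen), List.pairwise_iff_get.2 fun i j hij => ?_⟩
  simp only [Equiv.trans_apply, hpos]
  exact hij

-- Binary search: `x` is known to lie above `L` and below `R`, and each comparison with a middle
-- element of `M` costs one mistake and leaves one of the two halves of `M` undecided.
theorem guessForce_increasingAlong_inter_of_insert
    (h : ∀ L R, L ++ R = l → GuessForce (IsOrderIsoAt n 2) (increasingAlong (L ++ x :: R)) m)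
    (L M R : List (Fin n)) (hl : L ++ M ++ R = l) (hx : x ∉ M) (hv : 2 ^ v ≤ M.length + 1) :
    GuessForce (IsOrderIsoAt n 2) (increasingAlong l ∩ increasingAlong (L ++ x :: R)) (m + v) := by
  induction v generalizing L M R with
  | zero =>
    refine (h (L ++ M) R hl).mono (Set.subset_inter ?_ ?_) <;>
      refine increasingAlong_subset_of_sublist ?_ <;> simp [← hl]
  | succ v ih =>
    have hsplit : (2 ^ v - 1) + (2 ^ v - 1) < M.length := by
      have := Nat.two_pow_pos v
      omega
    obtain ⟨M₁, y, M₂, rfl, hM₁, hM₂⟩ := exists_eq_append_cons_of_add_lt_length hsplit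
    simp only [List.mem_append, List.mem_cons, not_or] at hx
    obtain ⟨hx₁, hxy, hx₂⟩ := hx
    refine guessForce_succ_of_compare hxy ?_ ?_
    · refine (ih L M₁ (y :: M₂ ++ R) (by simp [← hl]) hx₁ (by omega)).mono fun f hf => ?_
      exact ⟨⟨hf.1, increasingAlong_subset_of_sublist (by simp) hf.2⟩,
        lt_of_mem_increasingAlong hf.2 (by simp)⟩
    · refine (ih (L ++ M₁ ++ [y]) M₂ R (by simp [← hl]) hx₂ (by omega)).mono fun f hf => ?_
      exact ⟨⟨hf.1, increasingAlong_subset_of_sublist (by simp) hf.2⟩,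
        lt_of_mem_increasingAlong hf.2 (by simp)⟩

theorem guessForce_increasingAlong_of_insert (hx : x ∉ l)
    (h : ∀ L R, L ++ R = l → GuessForce (IsOrderIsoAt n 2) (increasingAlong (L ++ x :: R)) m) :
    GuessForce (IsOrderIsoAt n 2) (increasingAlong l) (m + Nat.log 2 (l.length + 1)) :=
  (guessForce_increasingAlong_inter_of_insert h [] l [] (by simp) hx
    (Nat.pow_log_le_self 2 l.length.succ_ne_zero)).mono Set.inter_subset_left

theorem guessForce_increasingAlong (l : List (Fin n)) (hl : l.Nodup) :
    GuessForce (IsOrderIsoAt n 2) (increasingAlong l)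
      (∑ k ∈ Finset.Icc (l.length + 1) n, Nat.log 2 k) := by
  by_cases hmem : ∀ a, a ∈ l
  · rw [length_eq_card_of_nodup_of_forall_mem hl hmem, Fintype.card_fin,
      Finset.Icc_eq_empty (by simp), Finset.sum_empty]
    exact .zero _ (increasingAlong_nonempty hl hmem)
  · obtain ⟨x, hx⟩ := not_forall.1 hmem
    have hlt : l.length < n := by
      simpa using (List.nodup_cons.2 ⟨hx, hl⟩).length_le_card
    rw [← Finset.add_sum_Ioc_eq_sum_Icc hlt, add_comm, ← Finset.Icc_add_one_left_eq_Ioc]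
    refine guessForce_increasingAlong_of_insert hx fun L R hLR => ?_
    have hperm : (L ++ x :: R).Perm (x :: l) := hLR ▸ List.perm_middle
    have hlen : (L ++ x :: R).length = l.length + 1 := hperm.length_eq
    rw [← hlen]
    exact guessForce_increasingAlong (L ++ x :: R)
      (hperm.nodup_iff.2 (List.nodup_cons.2 ⟨hx, hl⟩))
termination_by n - l.length
decreasing_by rw [hlen]; omega

end BinaryInsertion

/-- For all `n ≥ 2`, `opt_weak,<,2(S_n) ≥ p(n)`, where
`p(n) = Σ_{m=1}^{n} ⌊log₂ m⌋`. -/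
theorem stmt13 (n : ℕ) (hn : 2 ≤ n) :
    ∑ m ∈ Finset.Icc 1 n, Nat.log 2 m
      ≤ optOrder n 2 (Set.univ : Set (Equiv.Perm (Fin n))) :=
  ((guessForce_increasingAlong [] List.nodup_nil).mono (Set.subset_univ _)).le_optOrder
end

section
/- For every ε > 0 there exists r₀ such that for every integer r ≥ r₀ there exists n₀ such that for all n ≥ n₀, opt_weak,c,r(S_n) ≥ (1−ε)·(2^r/r)·n·log₂(n). -/
/-- `opt_weak,c,r(F)`: the comparison model. In each round the adversary chooses `r` distinct
ordered pairs of distinct inputs, and the learner guesses, for each pair `(i,j)`, whether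
`f i < f j`; weak reinforcement (told only whether all `r` guesses are correct). -/
noncomputable def optComp (n r : ℕ) (F : Set (Equiv.Perm (Fin n))) : ℕ :=
  sSup {m | GuessForce
    (fun (x : {x : Fin r → Fin n × Fin n // Function.Injective x ∧ ∀ k, (x k).1 ≠ (x k).2})
         (g : Fin r → Bool) f =>
      ∀ k, (g k = true ↔ f (x.1 k).1 < f (x.1 k).2)) F m}

/-!
The adversary splits the elements into `2 ^ K` pivots and groups of `r`, and inserts the elements of
each group among the pivots by simultaneous binary search: one query compares every element of a
group with the midpoint of its current interval. Each of the `2 ^ r` answer vectors to such a query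
can still be realised by a permutation, so repeating the query and saying "no" forces `2 ^ r - 1`
mistakes before the intervals are halved. With `a` groups this gives `a * K * (2 ^ r - 1)` mistakes,
and taking `2 ^ K` close to `n / 2 ^ r` loses only a factor `(1 - 2⁻ʳ) ^ 2` asymptotically.
-/

/-- An adaptive scheme of queries is realizable in the version space `V` if every transcript `w` of
answers is the list of correct answers for some target in `V`. Here `q i w` is the query asked in
round `i`; that it only sees the answers of earlier rounds is a separate `DependsOn` hypothesis. -/
def IsRealizable {α Q A ι : Type*} (ok : Q → A → α → Prop) (V : Set α) (q : ι → (ι → A) → Q) :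
    Prop :=
  ∀ w : ι → A, ∃ f ∈ V, ∀ i, ok (q i w) (w i) f

namespace GuessForce

variable {α Q A : Type*} {ok : Q → A → α → Prop} {V W : Set α} {m : ℕ}

theorem succ_of_forall_wrong [Nonempty A] (q : Q)
    (h : ∀ g, GuessForce ok {f ∈ V | ¬ ok q g f} m) : GuessForce ok V (m + 1) :=
  .step V m q (fun _ => true) (fun g => by simpa using (h g).nonempty) fun g => by simpa using h g

/-- The adversary repeats `q`, answering "no" each time: every "no" rules out at most one guess. -/
theorem add_of_lt_card {q : Q} (huniq : ∀ f, {g | ok q g f}.Subsingleton) {s : ℕ}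
    {S : Finset A} (hs : s < S.card) (h : ∀ g ∈ S, GuessForce ok {f ∈ V | ok q g f} m) :
    GuessForce ok V (m + s) := by
  classical
  induction s generalizing S V with
  | zero =>
    obtain ⟨g, hg⟩ := Finset.card_pos.1 hs
    exact (h g hg).mono (Set.sep_subset _ _)
  | succ s ih =>
    have : Nonempty A := (Finset.card_pos.1 (Nat.zero_lt_of_lt hs)).to_type
    refine succ_of_forall_wrong q fun g => ih (S := S.erase g) ?_ fun g' hg' => ?_
    · exact (Nat.lt_sub_of_add_lt hs).trans_le Finset.pred_card_le_card_erase
    · obtain ⟨hne, hg'S⟩ := Finset.mem_erase.1 hg'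
      exact (h g' hg'S).mono fun f hf =>
        ⟨⟨hf.1, fun hg => hne (huniq f hf.2 hg)⟩, hf.2⟩

section IsRealizable

variable {ι : Type*} [Fintype A] [Nonempty A] [PartialOrder ι]

/-- Induction on the set `S` of rounds still to be played, the next round being minimal in `S`. -/
theorem of_isRealizable_of_isUpperSet (huniq : ∀ q f, {g | ok q g f}.Subsingleton)
    {q : ι → (ι → A) → Q} (hq : ∀ i, DependsOn (q i) (Set.Iio i)) (hV : IsRealizable ok V q)
    (S : Finset ι) (hS : IsUpperSet (S : Set ι)) (w : ι → A) :
    GuessForce ok {f ∈ V | ∀ i ∉ S, ok (q i w) (w i) f} (S.card * (Fintype.card A - 1)) := by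
  classical
  induction S using Finset.eraseInduction generalizing w with
  | H S ih =>
    obtain rfl | hne := S.eq_empty_or_nonempty
    · obtain ⟨f, hfV, hf⟩ := hV w
      simpa using GuessForce.zero (ok := ok) {f ∈ V | ∀ i, ok (q i w) (w i) f} ⟨f, hfV, hf⟩
    obtain ⟨j, hj⟩ := S.exists_minimal hne
    have hupper : IsUpperSet (S.erase j : Set ι) := by
      rw [Finset.coe_erase]
      exact hS.erase fun b hb hbj => hj.eq_of_le hb hbj
    rw [← Finset.card_erase_add_one hj.prop, add_one_mul]
    refine add_of_lt_card (huniq (q j w)) (S := Finset.univ) (by simp [Fintype.card_pos])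
      fun g _ => ?_
    refine (ih j hj.prop hupper (Function.update w j g)).mono fun f ⟨hfV, hf⟩ => ?_
    have hupdate (i : ι) (hi : ¬ j < i) : q i (Function.update w j g) = q i w :=
      hq i fun k hk => Function.update_of_ne (ne_of_mem_of_not_mem hk hi) _ _
    refine ⟨⟨hfV, fun i hi => ?_⟩, ?_⟩
    · have hij : i ≠ j := fun hij => hi (hij ▸ hj.prop)
      simpa [hupdate i fun hji => hi (hS hji.le hj.prop), hij]
        using hf i fun h => hi (Finset.mem_of_mem_erase h)
    · simpa [hupdate j (lt_irrefl j)] using hf j (Finset.notMem_erase j S)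

theorem of_isRealizable [Fintype ι] (huniq : ∀ q f, {g | ok q g f}.Subsingleton)
    {q : ι → (ι → A) → Q} (hq : ∀ i, DependsOn (q i) (Set.Iio i)) (hV : IsRealizable ok V q) :
    GuessForce ok V (Fintype.card ι * (Fintype.card A - 1)) :=
  (of_isRealizable_of_isUpperSet huniq hq hV Finset.univ (by simpa using isUpperSet_univ)
    (Classical.arbitrary _)).mono (Set.sep_subset _ _)

end IsRealizable

end GuessForce

section Comparison

variable {n r : ℕ}

/-- The queries of the comparison model: `r` distinct ordered pairs of distinct inputs, in the
encoding used by `optComp`. -/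
abbrev CompQuery (n r : ℕ) : Type :=
  {x : Fin r → Fin n × Fin n // Function.Injective x ∧ ∀ k, (x k).1 ≠ (x k).2}

/-- The correctness relation of the comparison model: all `r` guesses `g` about the query `x` are
right for the target `f`. -/
abbrev CompOk (x : CompQuery n r) (g : Fin r → Bool) (f : Equiv.Perm (Fin n)) : Prop :=
  ∀ k, (g k = true ↔ f (x.1 k).1 < f (x.1 k).2)

theorem subsingleton_compOk (x : CompQuery n r) (f : Equiv.Perm (Fin n)) :
    {g | CompOk x g f}.Subsingleton :=
  fun _ hg _ hg' => funext fun k => Bool.eq_iff_iff.2 ((hg k).trans (hg' k).symm)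

theorem exists_compOk (x : CompQuery n r) (f : Equiv.Perm (Fin n)) : ∃ g, CompOk x g f :=
  ⟨fun k => decide (f (x.1 k).1 < f (x.1 k).2), fun _ => decide_eq_true_iff⟩

theorem GuessForce.le_optComp {F : Set (Equiv.Perm (Fin n))} {m : ℕ}
    (h : GuessForce (CompOk (r := r)) F m) : m ≤ optComp n r F :=
  le_csSup ⟨F.ncard, fun _ hm => (hm.lt_ncard exists_compOk F.toFinite).le⟩ h

end Comparison

/-- The threshold at which binary search determines bit `p` of a number `y` whose higher bits are
known: it has the bits of `y` above `p`, a one in position `p` and zeros below. -/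
def bisect (y p : ℕ) : ℕ := 2 ^ (p + 1) * (y / 2 ^ (p + 1)) + 2 ^ p

theorem bisect_le_iff_testBit {y p : ℕ} : bisect y p ≤ y ↔ y.testBit p = true := by
  have hdiv : y / 2 ^ (p + 1) = y / 2 ^ p / 2 := by rw [pow_succ, Nat.div_div_eq_div_mul]
  have hbisect : bisect y p = 2 ^ p * (2 * (y / 2 ^ p / 2) + 1) := by rw [bisect, hdiv]; ring
  rw [hbisect, mul_comm, ← Nat.le_div_iff_mul_le (Nat.two_pow_pos p),
    Nat.testBit_eq_decide_div_mod_eq, decide_eq_true_iff]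
  omega

theorem bisect_lt_two_pow {K y p : ℕ} (hy : y < 2 ^ K) (hp : p < K) : bisect y p < 2 ^ K := by
  obtain ⟨d, rfl⟩ := Nat.exists_eq_add_of_le hp
  have hdiv : y / 2 ^ (p + 1) < 2 ^ d := by
    rwa [Nat.div_lt_iff_lt_mul (Nat.two_pow_pos _), mul_comm, ← pow_add]
  calc bisect y p < 2 ^ (p + 1) * (y / 2 ^ (p + 1)) + 2 ^ (p + 1) := by
        rw [bisect]
        gcongr <;> omega
    _ = 2 ^ (p + 1) * (y / 2 ^ (p + 1) + 1) := by ring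
    _ ≤ 2 ^ (p + 1) * 2 ^ d := Nat.mul_le_mul_left _ hdiv
    _ = 2 ^ (p + 1 + d) := (pow_add ..).symm

theorem bisect_congr {x y p : ℕ} (h : ∀ i, p < i → x.testBit i = y.testBit i) :
    bisect x p = bisect y p := by
  have hdiv : x / 2 ^ (p + 1) = y / 2 ^ (p + 1) :=
    Nat.eq_of_testBit_eq fun i => by
      simp only [Nat.testBit_div_two_pow]
      exact h _ (by omega)
  rw [bisect, bisect, hdiv]

section Insertion

theorem exists_perm_lt_of_lt {n : ℕ} {β : Type*} [LinearOrder β] (key : Fin n → β) :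
    ∃ f : Equiv.Perm (Fin n), ∀ u v, key u < key v → f u < f v := by
  refine ⟨(Tuple.sort key).symm, fun u v huv => not_le.1 fun hvu => huv.not_ge ?_⟩
  simpa using Tuple.monotone_sort key hvu

theorem exists_perm_pivot_lt_iff {n M : ℕ} {β : Type*} (e : Fin M ⊕ β ↪ Fin n) (y : β → ℕ) :
    ∃ f : Equiv.Perm (Fin n), ∀ j b, f (e (.inl j)) < f (e (.inr b)) ↔ (j : ℕ) ≤ y b := by
  let key : Fin M ⊕ β → ℕ := Sum.elim (fun j => 2 * j) (fun b => 2 * y b + 1)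
  obtain ⟨f, hf⟩ := exists_perm_lt_of_lt (Function.extend e key 0)
  have hlt (u v : Fin M ⊕ β) (huv : key u < key v) : f (e u) < f (e v) :=
    hf _ _ (by simpa only [e.injective.extend_apply] using huv)
  refine ⟨f, fun j b => ⟨fun h => not_lt.1 fun hj => h.not_gt (hlt _ _ ?_), fun h => hlt _ _ ?_⟩⟩
  · change 2 * y b + 1 < 2 * (j : ℕ)
    omega
  · change 2 * (j : ℕ) < 2 * y b + 1
    omega

variable {n r a K : ℕ}

/-- The rounds of the adversary: round `(i, p)` determines bit `p` of the ranks of the elements of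
group `i`. The order dual makes the most significant bits come first. -/
abbrev InsertionRound (a K : ℕ) : Type := Fin a × (Fin K)ᵒᵈ

/-- The rank among the pivots of the element `b.2` of group `b.1`, read off from the answers
`w` given in all rounds. -/
def insertionRank (w : InsertionRound a K → Fin r → Bool) (b : Fin a × Fin r) : ℕ :=
  Nat.ofBits fun p => w (b.1, OrderDual.toDual p) b.2

theorem testBit_insertionRank (w : InsertionRound a K → Fin r → Bool) (b : Fin a × Fin r)
    (p : Fin K) : (insertionRank w b).testBit p = w (b.1, OrderDual.toDual p) b.2 :=
  Nat.testBit_ofBits_lt _ _ p.2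

/-- The query of round `(i, p)` in the simultaneous binary insertion of the elements of group `i`
among `2 ^ K` pivots, as a function of the answers `w`. -/
def insertionQuery (e : Fin (2 ^ K) ⊕ Fin a × Fin r ↪ Fin n) (i : InsertionRound a K)
    (w : InsertionRound a K → Fin r → Bool) : CompQuery n r :=
  ⟨fun k => (e (.inl ⟨bisect (insertionRank w (i.1, k)) (OrderDual.ofDual i.2 : Fin K),
      bisect_lt_two_pow (Nat.ofBits_lt_two_pow _) (OrderDual.ofDual i.2).2⟩), e (.inr (i.1, k))),
    fun k l hkl => by simpa using (Prod.ext_iff.1 hkl).2,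
    fun k => by simp⟩

theorem dependsOn_insertionQuery (e : Fin (2 ^ K) ⊕ Fin a × Fin r ↪ Fin n)
    (i : InsertionRound a K) : DependsOn (insertionQuery e i) (Set.Iio i) := by
  intro w w' h
  have hbisect (k : Fin r) : bisect (insertionRank w (i.1, k)) (OrderDual.ofDual i.2 : Fin K) =
      bisect (insertionRank w' (i.1, k)) (OrderDual.ofDual i.2 : Fin K) := by
    refine bisect_congr fun p hp => ?_
    obtain hpK | hpK := lt_or_ge p K
    · have hlt : (i.1, OrderDual.toDual ⟨p, hpK⟩) < i := Prod.mk_lt_mk_iff_right.2 hp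
      rw [testBit_insertionRank w _ ⟨p, hpK⟩, testBit_insertionRank w' _ ⟨p, hpK⟩, h _ hlt]
    · simp [insertionRank, hpK]
  simp only [insertionQuery, hbisect]

theorem isRealizable_insertionQuery (e : Fin (2 ^ K) ⊕ Fin a × Fin r ↪ Fin n) :
    IsRealizable CompOk Set.univ (insertionQuery e) := by
  intro w
  obtain ⟨f, hf⟩ := exists_perm_pivot_lt_iff e (insertionRank w)
  refine ⟨f, Set.mem_univ f, fun i k => ?_⟩
  simp only [insertionQuery, hf, bisect_le_iff_testBit, testBit_insertionRank]
  rfl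

theorem mul_le_optComp (h : 2 ^ K + a * r ≤ n) :
    a * K * (2 ^ r - 1) ≤ optComp n r Set.univ := by
  obtain ⟨e⟩ : Nonempty (Fin (2 ^ K) ⊕ Fin a × Fin r ↪ Fin n) :=
    Function.Embedding.nonempty_of_card_le (by simpa using h)
  have hforce := GuessForce.of_isRealizable subsingleton_compOk (dependsOn_insertionQuery e)
    (isRealizable_insertionQuery e)
  simpa using hforce.le_optComp

end Insertion

section Asymptotics

open Filter Topology

variable {r : ℕ}

theorem natCast_div_mul_le_optComp {n K : ℕ} (hK : 2 ^ K ≤ n) :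
    ((n - 2 ^ K) / r : ℕ) * K * (2 ^ r - 1) ≤ (optComp n r Set.univ : ℝ) := by
  have hcard : 2 ^ K + (n - 2 ^ K) / r * r ≤ n :=
    (Nat.le_sub_iff_add_le' hK).1 (Nat.div_mul_le_self _ _)
  have hopt := mul_le_optComp hcard
  rify [Nat.one_le_two_pow (n := r)] at hopt
  exact hopt

theorem logb_sub_mul_le_optComp {n : ℕ} (hn : 2 ^ (r + 1) ≤ n) :
    ((1 - (1 / 2) ^ r) * n / r - 1) * (Real.logb 2 n - (r + 1)) * (2 ^ r - 1) ≤
      (optComp n r Set.univ : ℝ) := by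
  have hlog : r + 1 ≤ Nat.log 2 n := Nat.le_log_of_pow_le one_lt_two hn
  obtain ⟨K, hK⟩ := Nat.exists_eq_add_of_le' ((Nat.le_succ r).trans hlog)
  have hpow : 2 ^ K * 2 ^ r ≤ n := by
    rw [← pow_add, ← hK]
    exact Nat.pow_log_le_self 2 ((Nat.two_pow_pos _).trans_le hn).ne'
  have hpow_le : 2 ^ K ≤ n := (Nat.le_mul_of_pos_right _ (Nat.two_pow_pos r)).trans hpow
  have hgroups : (1 - (1 / 2) ^ r) * n / r - 1 ≤ (((n - 2 ^ K) / r : ℕ) : ℝ) := by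
    have hpivots : (2 : ℝ) ^ K ≤ (1 / 2) ^ r * n := by
      rw [one_div_pow, one_div_mul_eq_div, le_div_iff₀ (by positivity)]
      exact_mod_cast hpow
    calc (1 - (1 / 2) ^ r) * n / r - 1 ≤ ((n - 2 ^ K : ℕ) : ℝ) / r - 1 := by
          push_cast [hpow_le]
          gcongr
          linarith
      _ ≤ ((n - 2 ^ K) / r : ℕ) := by
          rw [← Nat.floor_div_eq_div (K := ℝ)]
          exact (Nat.sub_one_lt_floor _).le
  have hbits : Real.logb 2 n - (r + 1) ≤ K := by
    have hlt : Real.logb 2 n < Nat.log 2 n + 1 := by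
      rw [← Real.natFloor_logb_natCast]
      exact Nat.lt_floor_add_one _
    rw [hK, Nat.cast_add] at hlt
    linarith
  have hlogb : (0 : ℝ) ≤ Real.logb 2 n - (r + 1) :=
    sub_nonneg.2 (le_trans (by exact_mod_cast hlog) (Real.natLog_le_logb n 2))
  have hguess : (0 : ℝ) ≤ 2 ^ r - 1 := sub_nonneg.2 (one_le_pow₀ one_le_two)
  refine le_trans ?_ (natCast_div_mul_le_optComp hpow_le)
  gcongr

theorem eventually_mul_le_optComp (hr : 0 < r) {c : ℝ} (hc : c < (1 - (1 / 2) ^ r) ^ 2) :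
    ∀ᶠ n : ℕ in atTop, c * (2 ^ r / r) * n * Real.logb 2 n ≤ optComp n r Set.univ := by
  have hlogb : Tendsto (fun n : ℕ => Real.logb 2 n) atTop atTop :=
    (Real.tendsto_logb_atTop one_lt_two).comp tendsto_natCast_atTop_atTop
  have hlim : Tendsto (fun n : ℕ => (1 - (1 / 2) ^ r - r / n) * (1 - (r + 1) / Real.logb 2 n) *
      (1 - (1 / 2) ^ r)) atTop (𝓝 ((1 - (1 / 2) ^ r) ^ 2)) := by
    rw [sq]
    have hn := (tendsto_const_div_atTop_nhds_zero_nat (r : ℝ)).const_sub (1 - (1 / 2) ^ r)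
    have hlog := (hlogb.const_div_atTop (r + 1 : ℝ)).const_sub 1
    simpa only [sub_zero, mul_one] using (hn.mul hlog).mul_const (1 - (1 / 2) ^ r)
  filter_upwards [hlim.eventually_const_lt hc, hlogb.eventually_gt_atTop 0,
    eventually_ge_atTop (2 ^ (r + 1))] with n hcn hlog hn
  have hn0 : (n : ℝ) ≠ 0 := Nat.cast_ne_zero.2 ((Nat.two_pow_pos _).trans_le hn).ne'
  calc c * (2 ^ r / r) * n * Real.logb 2 n
      ≤ (1 - (1 / 2) ^ r - r / n) * (1 - (r + 1) / Real.logb 2 n) * (1 - (1 / 2) ^ r) *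
          (2 ^ r / r) * n * Real.logb 2 n := by gcongr
    _ = ((1 - (1 / 2) ^ r) * n / r - 1) * (Real.logb 2 n - (r + 1)) * (2 ^ r - 1) := by
        rw [one_div_pow]
        field_simp
    _ ≤ optComp n r Set.univ := logb_sub_mul_le_optComp hn

end Asymptotics

/-- For every `ε > 0` there exists `r₀` such that for every integer
`r ≥ r₀` there exists `n₀` such that for all `n ≥ n₀`,
`opt_weak,c,r(S_n) ≥ (1−ε)·(2^r/r)·n·log₂(n)`. -/
theorem stmt16 (ε : ℝ) (hε : 0 < ε) :
    ∃ r₀ : ℕ, ∀ r : ℕ, r₀ ≤ r → ∃ n₀ : ℕ, ∀ n : ℕ, n₀ ≤ n →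
      (1 - ε) * ((2 : ℝ) ^ r / r) * n * Real.logb 2 n
        ≤ (optComp n r (Set.univ : Set (Equiv.Perm (Fin n))) : ℝ) := by
  have hlim : Filter.Tendsto (fun r : ℕ => (1 - (1 / 2 : ℝ) ^ r) ^ 2) Filter.atTop (nhds 1) := by
    simpa using ((tendsto_pow_atTop_nhds_zero_of_lt_one (r := (1 / 2 : ℝ)) (by norm_num)
      (by norm_num)).const_sub 1).pow 2
  obtain ⟨r₀, hr₀⟩ := Filter.eventually_atTop.1
    ((hlim.eventually_const_lt (sub_lt_self 1 hε)).and (Filter.eventually_gt_atTop 0))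
  exact ⟨r₀, fun r hr =>
    Filter.eventually_atTop.1 (eventually_mul_le_optComp (hr₀ r hr).2 (hr₀ r hr).1)⟩
end
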